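/- For every m with 0 ≤ m ≤ T−1 and every q, the windowed-DFT quantity S_m(q) = Σ_{j=0}^{T−1−m} (z_c(P−T+j) − z_c(−T+j)) ω^{(j−T)q} equals the circular convolution (1/P) Σ_{k=0}^{P−1} Z_c^{end-res}(q−k) C_m(k), where Z_c^{end-res}(p) = Σ_{k=−T}^{P−T−1} (z_c(k+P) − z_c(k)) ω^{kp}, C_m(p) = Σ_{k=−T}^{−m−1} ω^{kp}, and the argument q−k of Z_c^{end-res} is taken modulo P. -/

import Mathlib

open Finset

/-!
The product of two windowed transforms at frequencies `q - k` and `k` expands into the terms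
`x n * y l * ω ^ (n * q) * ω ^ ((l - n) * k)`. Summing over a full period of `k` kills every term
with `l ≢ n` modulo `P`, and two indices in one window of length `P` are congruent only if they
are equal. So the convolution is `P` times the transform of `x * y` over the common window, and
taking `y = 1` truncates the window of `x`.
-/

section

variable {K : Type*} [Field K] {ω : K} {P : ℕ}

/-- The discrete Fourier transform `∑ k ∈ W, x k * ω ^ (k * p)` of a sequence restricted to a finite
window `W` of integer times. Both `Z_c^{end-res}` and `C_m` have this form, the latter with the
constant sequence `1`; the kernel `ω` is a parameter, so that any field with a primitive root of
unity is covered. -/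
def windowDFT (ω : K) (W : Finset ℤ) (x : ℤ → K) (p : ℤ) : K :=
  ∑ k ∈ W, x k * ω ^ (k * p)

theorem windowDFT_emod [NeZero P] (hω : ω ^ P = 1) (W : Finset ℤ) (x : ℤ → K) (p : ℤ) :
    windowDFT ω W x (p % P) = windowDFT ω W x p := by
  have hω₀ : ω ≠ 0 := ne_zero_pow (NeZero.ne P) (hω ▸ one_ne_zero)
  have zpow_emod (a : ℤ) : ω ^ (a % P) = ω ^ a := by
    conv_rhs => rw [← Int.emod_add_mul_ediv a P, zpow_add₀ hω₀, zpow_mul, zpow_natCast, hω,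
      one_zpow, mul_one]
  refine sum_congr rfl fun k _ ↦ ?_
  have hmod : k * (p % P) ≡ k * p [ZMOD P] := (Int.mod_modEq p P).mul_left k
  rw [← zpow_emod, hmod, zpow_emod]

theorem sum_range_zpow_mul_of_isPrimitiveRoot (hω : IsPrimitiveRoot ω P) (d : ℤ) :
    ∑ k ∈ range P, ω ^ (d * (k : ℤ)) = if (P : ℤ) ∣ d then (P : K) else 0 := by
  simp only [zpow_mul, zpow_natCast]
  split_ifs with hd
  · simp [(hω.zpow_eq_one_iff_dvd d).2 hd]
  · have hne : ω ^ d ≠ 1 := mt (hω.zpow_eq_one_iff_dvd d).1 hd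
    have hpow : (ω ^ d) ^ P = 1 := by
      rw [← zpow_natCast, zpow_comm, zpow_natCast, hω.pow_eq_one, one_zpow]
    rw [geom_sum_eq hne, hpow, sub_self, zero_div]

theorem sum_windowDFT_sub_mul_windowDFT [NeZero P] (hω : IsPrimitiveRoot ω P) {W V : Finset ℤ}
    (hWV : ∀ n ∈ W, ∀ l ∈ V, n ≡ l [ZMOD P] → n = l) (x y : ℤ → K) (q : ℤ) :
    ∑ k ∈ range P, windowDFT ω W x (q - k) * windowDFT ω V y k
      = P * windowDFT ω (W ∩ V) (x * y) q := by
  have hω₀ : ω ≠ 0 := hω.ne_zero (NeZero.ne P)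
  have split_exponent (n l k : ℤ) :
      x n * ω ^ (n * (q - k)) * (y l * ω ^ (l * k))
        = x n * y l * ω ^ (n * q) * ω ^ ((l - n) * k) := by
    have : ω ^ (n * (q - k)) * ω ^ (l * k) = ω ^ (n * q) * ω ^ ((l - n) * k) := by
      rw [← zpow_add₀ hω₀, ← zpow_add₀ hω₀]
      ring_nf
    linear_combination x n * y l * this
  have dvd_iff_eq {n l : ℤ} (hn : n ∈ W) (hl : l ∈ V) : (P : ℤ) ∣ l - n ↔ n = l :=
    ⟨fun h ↦ hWV n hn l hl (Int.modEq_iff_dvd.2 h), fun h ↦ by simp [h]⟩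
  calc ∑ k ∈ range P, windowDFT ω W x (q - k) * windowDFT ω V y k
      = ∑ n ∈ W, ∑ l ∈ V, x n * y l * ω ^ (n * q) * ∑ k ∈ range P, ω ^ ((l - n) * (k : ℤ)) := by
        simp only [windowDFT, sum_mul_sum, split_exponent]
        simp only [mul_sum]
        rw [sum_comm]
        exact sum_congr rfl fun n _ ↦ sum_comm
    _ = ∑ n ∈ W, ∑ l ∈ V, if n = l then P * (x n * y n * ω ^ (n * q)) else 0 := by
        refine sum_congr rfl fun n hn ↦ sum_congr rfl fun l hl ↦ ?_
        rw [sum_range_zpow_mul_of_isPrimitiveRoot hω, if_congr (dvd_iff_eq hn hl) rfl rfl]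
        split_ifs with h
        · rw [h, mul_comm]
        · rw [mul_zero]
    _ = P * windowDFT ω (W ∩ V) (x * y) q := by
        simp only [sum_ite_eq, sum_ite_mem, windowDFT, Pi.mul_apply, mul_sum]

theorem windowDFT_eq_circular_convolution [NeZero P] (hω : IsPrimitiveRoot ω P) {W V : Finset ℤ}
    (hVW : V ⊆ W) (hW : ∀ n ∈ W, ∀ l ∈ W, n ≡ l [ZMOD P] → n = l) (x : ℤ → K) (q : ℤ) :
    windowDFT ω V x q
      = 1 / P * ∑ k ∈ range P, windowDFT ω W x ((q - k) % P) * windowDFT ω V 1 k := by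
  have hP : (P : K) ≠ 0 := (hω.neZero').ne
  simp only [windowDFT_emod hω.pow_eq_one]
  rw [sum_windowDFT_sub_mul_windowDFT hω fun n hn l hl ↦ hW n hn l (hVW hl),
    inter_eq_right.2 hVW, mul_one, one_div, inv_mul_cancel_left₀ hP]

theorem eq_of_modEq_of_mem_Icc {a n l : ℤ} (hn : n ∈ Icc a (a + P - 1))
    (hl : l ∈ Icc a (a + P - 1)) (h : n ≡ l [ZMOD P]) : n = l := by
  rw [mem_Icc] at hn hl
  have hsub : l - n = 0 :=
    Int.eq_zero_of_abs_lt_dvd h.dvd (abs_lt.2 ⟨by lia, by lia⟩)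
  lia

theorem sum_intIcc_eq_sum_range {M : Type*} [AddCommMonoid M] (a b : ℤ) (f : ℤ → M) :
    ∑ k ∈ Icc a b, f k = ∑ j ∈ range (b + 1 - a).toNat, f (a + j) := by
  simp [Int.Icc_eq_finset_map]

theorem Sm_as_circular_convolution_general [NeZero P] (hω : IsPrimitiveRoot ω P) {T m : ℕ}
    (hT : T ≤ P + m) (z : ℤ → K) (q : ℤ) :
    ∑ j ∈ range (T - m), (z (P - T + j) - z (-T + j)) * ω ^ (((j : ℤ) - T) * q)
      = 1 / P * ∑ k ∈ range P,
          windowDFT ω (Icc (-(T : ℤ)) (P - T - 1)) (fun k ↦ z (k + P) - z k) ((q - k) % P)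
            * windowDFT ω (Icc (-(T : ℤ)) (-m - 1)) 1 k := by
  have hVW : Icc (-(T : ℤ)) (-m - 1) ⊆ Icc (-(T : ℤ)) (P - T - 1) :=
    Icc_subset_Icc_right (by lia)
  have hW : ∀ n ∈ Icc (-(T : ℤ)) (P - T - 1), ∀ l ∈ Icc (-(T : ℤ)) (P - T - 1),
      n ≡ l [ZMOD P] → n = l := by
    rw [← neg_add_eq_sub (T : ℤ) P]
    exact fun n hn l hl ↦ eq_of_modEq_of_mem_Icc hn hl
  have hlen : (-(m : ℤ) - 1 + 1 - -(T : ℤ)).toNat = T - m := by lia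
  rw [← windowDFT_eq_circular_convolution hω hVW hW, windowDFT, sum_intIcc_eq_sum_range, hlen]
  refine sum_congr rfl fun j _ ↦ ?_
  rw [neg_add_eq_sub, show (P : ℤ) - T + j = j - T + P by ring]

theorem isPrimitiveRoot_exp_neg [NeZero P] :
    IsPrimitiveRoot (Complex.exp (-(2 * Real.pi * Complex.I) / P)) P := by
  rw [neg_div, Complex.exp_neg]
  exact (Complex.isPrimitiveRoot_exp P (NeZero.ne P)).inv

end

/-- `S_m(q)` equals the circular convolution of `Z_c^{end-res}` with the
rectangular-window DFT `C_m`, with the frequency argument taken modulo `P`. -/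
theorem Sm_as_circular_convolution
    (P L T : ℕ) (hP : 1 ≤ P) (hTL : T < L) (hLP : L ≤ P)
    (zc : ℤ → ℝ)
    (ω : ℂ) (hω : ω = Complex.exp (-(2 * Real.pi * Complex.I) / (P : ℂ)))
    (Zend : ℤ → ℂ)
    (hZ : ∀ p : ℤ, Zend p = ∑ k ∈ Finset.Icc (-(T : ℤ)) ((P : ℤ) - (T : ℤ) - 1),
      ((zc (k + (P : ℤ)) - zc k : ℝ) : ℂ) * ω ^ (k * p))
    (C : ℕ → ℤ → ℂ)
    (hC : ∀ (m : ℕ) (p : ℤ), C m p = ∑ k ∈ Finset.Icc (-(T : ℤ)) (-(m : ℤ) - 1),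
      ω ^ (k * p)) :
    ∀ m : ℕ, m < T → ∀ q : ℕ,
      (∑ j ∈ Finset.range (T - m),
          ((zc ((P : ℤ) - (T : ℤ) + (j : ℤ)) - zc (-(T : ℤ) + (j : ℤ)) : ℝ) : ℂ)
            * ω ^ (((j : ℤ) - (T : ℤ)) * (q : ℤ)))
        = (1 / (P : ℂ)) * ∑ k ∈ Finset.range P,
            Zend (((q : ℤ) - (k : ℤ)) % (P : ℤ)) * C m (k : ℤ) := by
  intro m _ q
  have : NeZero P := ⟨Nat.one_le_iff_ne_zero.1 hP⟩
  simpa only [hZ, hC, windowDFT, Complex.ofReal_sub, Pi.one_apply, one_mul] using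
    Sm_as_circular_convolution_general (hω ▸ isPrimitiveRoot_exp_neg) (by lia : T ≤ P + m)
      (fun n ↦ (zc n : ℂ)) q
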